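/- For each ordered pair (α,β) in {(132,321), (213,321), (231,123), (312,123)} of patterns of length three, and for every n ≥ 3, the number of permutations of {1,…,n} that avoid α and contain β exactly once is s_n(α;β) = 2n−5. -/

import Mathlib

/-- Number of occurrences of the pattern `α ∈ S_k` in the permutation `π ∈ S_n`:
the number of strictly increasing choices of `k` indices such that the corresponding
subword of `π` is order-isomorphic to `α`. -/
noncomputable def occCount {k n : ℕ} (α : Equiv.Perm (Fin k)) (π : Equiv.Perm (Fin n)) : ℕ :=
  Nat.card {f : Fin k → Fin n // StrictMono f ∧ ∀ a b : Fin k, α a < α b ↔ π (f a) < π (f b)}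

/-- `π` avoids the pattern `α`. -/
def avoids {k n : ℕ} (α : Equiv.Perm (Fin k)) (π : Equiv.Perm (Fin n)) : Prop :=
  occCount α π = 0

/-- `π` contains the pattern `α` exactly once. -/
def containsOnce {k n : ℕ} (α : Equiv.Perm (Fin k)) (π : Equiv.Perm (Fin n)) : Prop :=
  occCount α π = 1

/-- The pattern `123` (as a permutation of `Fin 3`, 0-indexed). -/
def p123 : Equiv.Perm (Fin 3) := ⟨![0,1,2], ![0,1,2], by decide, by decide⟩
/-- The pattern `132`. -/
def p132 : Equiv.Perm (Fin 3) := ⟨![0,2,1], ![0,2,1], by decide, by decide⟩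
/-- The pattern `213`. -/
def p213 : Equiv.Perm (Fin 3) := ⟨![1,0,2], ![1,0,2], by decide, by decide⟩
/-- The pattern `231`. -/
def p231 : Equiv.Perm (Fin 3) := ⟨![1,2,0], ![2,0,1], by decide, by decide⟩
/-- The pattern `312`. -/
def p312 : Equiv.Perm (Fin 3) := ⟨![2,0,1], ![1,2,0], by decide, by decide⟩
/-- The pattern `321`. -/
def p321 : Equiv.Perm (Fin 3) := ⟨![2,1,0], ![2,1,0], by decide, by decide⟩

/-- `s_n(α;β)`: the number of permutations of `{1,…,n}` that avoid `α` and contain `β`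
exactly once. -/
noncomputable def sAvoidContain (α β : Equiv.Perm (Fin 3)) (n : ℕ) : ℕ :=
  Nat.card {π : Equiv.Perm (Fin n) // avoids α π ∧ containsOnce β π}

/-- `s_n(∅;{α,β})`: the number of permutations of `{1,…,n}` that contain each of `α` and `β`
exactly once. -/
noncomputable def sContainBoth (α β : Equiv.Perm (Fin 3)) (n : ℕ) : ℕ :=
  Nat.card {π : Equiv.Perm (Fin n) // containsOnce α π ∧ containsOnce β π}

/-!
Let `π` avoid `132`, with its only occurrence of `321` at the positions `i < j < l`. An entry before
`j` other than `π i` would create a `132` or a second `321`, so `i = 0` and `j = 1` (positions and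
entries are 0-indexed). Inverting permutations preserves both patterns, so dually `π l = 0` and
`π j = 1`. If `l > 2` and `π i > 2`, then the entry `π 2` and the position `π⁻¹ 2` are so large that
`1`, `2`, `π⁻¹ 2` are the positions of a `132`. Hence `l = 2` or, dually, `π i = 2`. Entries after
position `1` other than `0` increase, so in the first case `π` is the word `k 1 0 2 3 ⋯` with
`k = π 0 ≥ 2`, and in the second case it is the inverse of such a word. Both cases hold together
exactly when `k = 2`, which leaves `(n - 2) + (n - 3)` permutations. The remaining pairs of patterns
reduce to `(132, 321)` by reversal and complementation.
-/

/-- `f` lists, in increasing order, the positions of an occurrence of the pattern `α` in `π`;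
`occCount α π` is by definition the number of such `f`. -/
def IsOccurrence {k n : ℕ} (α : Equiv.Perm (Fin k)) (π : Equiv.Perm (Fin n))
    (f : Fin k → Fin n) : Prop :=
  StrictMono f ∧ ∀ a b : Fin k, α a < α b ↔ π (f a) < π (f b)

section Occurrences

variable {k n : ℕ} {α : Equiv.Perm (Fin k)} {π : Equiv.Perm (Fin n)}

theorem avoids_iff_forall_not_isOccurrence : avoids α π ↔ ∀ f, ¬ IsOccurrence α π f :=
  Finite.card_eq_zero_iff.trans (isEmpty_subtype _)

theorem containsOnce_iff_existsUnique_isOccurrence :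
    containsOnce α π ↔ ∃! f, IsOccurrence α π f := by
  rw [containsOnce, occCount, Nat.card_eq_one_iff_unique, ← unique_iff_subsingleton_and_nonempty,
    unique_subtype_iff_existsUnique]
  rfl

theorem isOccurrence_iff_strictMono {f : Fin k → Fin n} :
    IsOccurrence α π f ↔ StrictMono f ∧ StrictMono (π ∘ f ∘ α.symm) := by
  refine and_congr_right fun _ ↦ ⟨fun h a b hab ↦ ?_, fun h a b ↦ ?_⟩
  · exact (h _ _).1 (by simpa using hab)
  · simpa using (h.lt_iff_lt (a := α a) (b := α b)).symm

theorem strictMono_fin_three_iff {β : Type*} [Preorder β] {f : Fin 3 → β} :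
    StrictMono f ↔ f 0 < f 1 ∧ f 1 < f 2 := by
  simp [Fin.strictMono_iff_lt_succ, Fin.forall_fin_two]

theorem isOccurrence_p132_iff {f : Fin 3 → Fin n} :
    IsOccurrence p132 π f ↔
      (f 0 < f 1 ∧ f 1 < f 2) ∧ π (f 0) < π (f 2) ∧ π (f 2) < π (f 1) := by
  rw [isOccurrence_iff_strictMono, strictMono_fin_three_iff, strictMono_fin_three_iff]
  rfl

theorem isOccurrence_p321_iff {f : Fin 3 → Fin n} :
    IsOccurrence p321 π f ↔
      (f 0 < f 1 ∧ f 1 < f 2) ∧ π (f 2) < π (f 1) ∧ π (f 1) < π (f 0) := by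
  rw [isOccurrence_iff_strictMono, strictMono_fin_three_iff, strictMono_fin_three_iff]
  rfl

end Occurrences

section Symmetries

variable {k n : ℕ}

theorem occCount_revPerm_mul (α : Equiv.Perm (Fin k)) (π : Equiv.Perm (Fin n)) :
    occCount (Fin.revPerm * α) (Fin.revPerm * π) = occCount α π := by
  refine Nat.card_congr (Equiv.subtypeEquivRight fun f ↦ and_congr_right fun _ ↦ ?_)
  simp only [Equiv.Perm.mul_apply, Fin.revPerm_apply, Fin.rev_lt_rev]
  exact forall_comm

theorem occCount_mul_revPerm (α : Equiv.Perm (Fin k)) (π : Equiv.Perm (Fin n)) :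
    occCount (α * Fin.revPerm) (π * Fin.revPerm) = occCount α π := by
  refine Nat.card_congr ((Equiv.arrowCongr Fin.revPerm Fin.revPerm).subtypeEquiv fun f ↦ ?_)
  refine and_congr ⟨fun h a b hab ↦ ?_, fun h a b hab ↦ ?_⟩
    ⟨fun h a b ↦ ?_, fun h a b ↦ ?_⟩
  · simpa using h (Fin.rev_lt_rev.2 hab)
  · simpa using h (Fin.rev_lt_rev.2 hab)
  · simpa using h a.rev b.rev
  · simpa using h a.rev b.rev

theorem sAvoidContain_revPerm_mul (α β : Equiv.Perm (Fin 3)) (n : ℕ) :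
    sAvoidContain (Fin.revPerm * α) (Fin.revPerm * β) n = sAvoidContain α β n := by
  refine (Nat.card_congr ((Equiv.mulLeft Fin.revPerm).subtypeEquiv fun π ↦ ?_)).symm
  simp only [avoids, containsOnce, Equiv.coe_mulLeft, occCount_revPerm_mul]

theorem sAvoidContain_mul_revPerm (α β : Equiv.Perm (Fin 3)) (n : ℕ) :
    sAvoidContain (α * Fin.revPerm) (β * Fin.revPerm) n = sAvoidContain α β n := by
  refine (Nat.card_congr ((Equiv.mulRight Fin.revPerm).subtypeEquiv fun π ↦ ?_)).symm
  simp only [avoids, containsOnce, Equiv.coe_mulRight, occCount_mul_revPerm]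

end Symmetries

theorem perm_eq_of_eqOn_of_strictMonoOn_compl {β : Type*} [LinearOrder β] [WellFoundedLT β]
    {π σ : Equiv.Perm β} {D : Set β} (hD : Set.EqOn π σ D) (hπ : StrictMonoOn π Dᶜ)
    (hσ : StrictMonoOn σ Dᶜ) : π = σ := by
  have image_eq : π '' Dᶜ = σ '' Dᶜ := by
    rw [Set.image_compl_eq π.bijective, Set.image_compl_eq σ.bijective, hD.image_eq]
  have restrict_eq : Dᶜ.domRestrict π = Dᶜ.domRestrict σ :=
    (hπ.domRestrict.range_inj hσ.domRestrict).1 <| by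
      simpa only [Set.range_domRestrict] using image_eq
  ext1 x
  by_cases hx : x ∈ D
  · exact hD hx
  · exact congrFun restrict_eq ⟨x, hx⟩

/-- `π` avoids `132`, and its only occurrence of `321` is at the positions `i < j < l`. Both
patterns are spelled out as inequalities between positions and between entries. -/
structure Avoids132WithOnly321At {n : ℕ} (π : Equiv.Perm (Fin n)) (i j l : Fin n) : Prop where
  not_132 : ∀ {a b c}, a < b → b < c → π a < π c → ¬ π c < π b
  fst_lt_snd : i < j
  snd_lt_thd : j < l
  apply_thd_lt_apply_snd : π l < π j
  apply_snd_lt_apply_fst : π j < π i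
  unique_321 : ∀ {a b c}, a < b → b < c → π c < π b → π b < π a → a = i ∧ b = j ∧ c = l

theorem avoids_and_containsOnce_iff_exists {n : ℕ} {π : Equiv.Perm (Fin n)} :
    avoids p132 π ∧ containsOnce p321 π ↔ ∃ i j l, Avoids132WithOnly321At π i j l := by
  simp only [avoids_iff_forall_not_isOccurrence, containsOnce_iff_existsUnique_isOccurrence,
    isOccurrence_p132_iff, isOccurrence_p321_iff]
  constructor
  · rintro ⟨h132, f, ⟨⟨h₀₁, h₁₂⟩, hπ₂₁, hπ₁₀⟩, hunique⟩
    refine ⟨f 0, f 1, f 2, fun {a b c} hab hbc hac hcb ↦ ?_, h₀₁, h₁₂, hπ₂₁, hπ₁₀,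
      fun {a b c} hab hbc hcb hba ↦ ?_⟩
    · exact h132 ![a, b, c] ⟨⟨hab, hbc⟩, hac, hcb⟩
    · simp [← hunique ![a, b, c] ⟨⟨hab, hbc⟩, hcb, hba⟩]
  · rintro ⟨i, j, l, h⟩
    refine ⟨fun f hf ↦ h.not_132 hf.1.1 hf.1.2 hf.2.1 hf.2.2, ![i, j, l],
      ⟨⟨h.fst_lt_snd, h.snd_lt_thd⟩, h.apply_thd_lt_apply_snd, h.apply_snd_lt_apply_fst⟩,
      fun f hf ↦ ?_⟩
    obtain ⟨h₀, h₁, h₂⟩ := h.unique_321 hf.1.1 hf.1.2 hf.2.1 hf.2.2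
    ext a
    fin_cases a <;> simp [h₀, h₁, h₂]

theorem fin_one_lt_two {m : ℕ} : (1 : Fin (m + 3)) < 2 := by
  simp only [Fin.lt_def, Fin.val_one, Fin.val_two, Nat.one_lt_two]

theorem fin_two_le_of_one_lt {m : ℕ} {p : Fin (m + 3)} (hp : 1 < p) : 2 ≤ p := by
  simp only [Fin.lt_def, Fin.le_def, Fin.val_one, Fin.val_two] at hp ⊢
  omega

theorem fin_le_two_iff {m : ℕ} {p : Fin (m + 3)} : p ≤ 2 ↔ p = 0 ∨ p = 1 ∨ p = 2 := by
  simp only [Fin.le_def, Fin.ext_iff, Fin.val_zero, Fin.val_one, Fin.val_two]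
  omega

namespace Avoids132WithOnly321At

section Positions

variable {n : ℕ} {π : Equiv.Perm (Fin n)} {i j l : Fin n}

theorem inv (h : Avoids132WithOnly321At π i j l) :
    Avoids132WithOnly321At π⁻¹ (π l) (π j) (π i) where
  not_132 {a b c} hab hbc hac hcb :=
    h.not_132 hac hcb (by simpa using hab) (by simpa using hbc)
  fst_lt_snd := h.apply_thd_lt_apply_snd
  snd_lt_thd := h.apply_snd_lt_apply_fst
  apply_thd_lt_apply_snd := by simpa using h.fst_lt_snd
  apply_snd_lt_apply_fst := by simpa using h.snd_lt_thd
  unique_321 {a b c} hab hbc hcb hba := by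
    obtain ⟨hc, hb, ha⟩ := h.unique_321 hcb hba (by simpa using hab) (by simpa using hbc)
    simp [← ha, ← hb, ← hc]

theorem eq_fst_of_lt_snd (h : Avoids132WithOnly321At π i j l) {p : Fin n} (hpj : p < j) :
    p = i := by
  rcases lt_or_gt_of_ne (π.injective.ne hpj.ne) with hπ | hπ
  · rcases lt_trichotomy p i with hpi | hpi | hip
    · exact absurd h.apply_snd_lt_apply_fst (h.not_132 hpi h.fst_lt_snd hπ)
    · exact hpi
    · have hlp : ¬ π l < π p := fun hlp ↦
        hpj.ne (h.unique_321 hip (hpj.trans h.snd_lt_thd) hlp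
          (hπ.trans h.apply_snd_lt_apply_fst)).2.1
      have hpl : π p < π l :=
        (not_lt.1 hlp).lt_of_ne (π.injective.ne (hpj.trans h.snd_lt_thd).ne)
      exact absurd h.apply_thd_lt_apply_snd (h.not_132 hpj h.snd_lt_thd hpl)
  · exact (h.unique_321 hpj h.snd_lt_thd h.apply_thd_lt_apply_snd hπ).1

theorem eq_thd_of_apply_lt_apply_snd (h : Avoids132WithOnly321At π i j l) {p : Fin n}
    (hp : π p < π j) : p = l :=
  π.injective (h.inv.eq_fst_of_lt_snd hp)

theorem apply_lt_apply (h : Avoids132WithOnly321At π i j l) {p q : Fin n} (hjp : j < p)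
    (hpq : p < q) (hql : q ≠ l) : π p < π q := by
  have hjq : π j < π q :=
    (not_lt.1 (mt h.eq_thd_of_apply_lt_apply_snd hql)).lt_of_ne
      (π.injective.ne (hjp.trans hpq).ne)
  exact (not_lt.1 (h.not_132 hjp hpq hjq)).lt_of_ne (π.injective.ne hpq.ne)

end Positions

section Values

variable {m : ℕ} {π : Equiv.Perm (Fin (m + 3))} {i j l : Fin (m + 3)}

theorem fst_eq_zero (h : Avoids132WithOnly321At π i j l) : i = 0 :=
  (h.eq_fst_of_lt_snd ((Fin.zero_le i).trans_lt h.fst_lt_snd)).symm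

theorem snd_eq_one (h : Avoids132WithOnly321At π i j l) : j = 1 := by
  have one_le : 1 ≤ j := Fin.one_le_of_ne_zero (Fin.ne_zero_of_lt h.fst_lt_snd)
  refine (one_le.eq_of_not_lt fun hj ↦ ?_).symm
  exact one_ne_zero ((h.eq_fst_of_lt_snd hj).trans h.fst_eq_zero)

theorem apply_thd_eq_zero (h : Avoids132WithOnly321At π i j l) : π l = 0 :=
  h.inv.fst_eq_zero

theorem apply_snd_eq_one (h : Avoids132WithOnly321At π i j l) : π j = 1 :=
  h.inv.snd_eq_one

theorem two_le_thd (h : Avoids132WithOnly321At π i j l) : 2 ≤ l :=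
  fin_two_le_of_one_lt (h.snd_eq_one ▸ h.snd_lt_thd)

theorem two_le_apply_fst (h : Avoids132WithOnly321At π i j l) : 2 ≤ π i :=
  h.inv.two_le_thd

-- Otherwise `0`, `2`, `l` would be the positions of a second occurrence of `321`.
theorem apply_fst_lt_apply_two (h : Avoids132WithOnly321At π i j l) (hl : 2 < l) :
    π i < π 2 := by
  have hj : j < 2 := h.snd_eq_one ▸ fin_one_lt_two
  by_contra hle
  have lt_apply_fst : π 2 < π i :=
    (not_lt.1 hle).lt_of_ne (π.injective.ne (h.fst_lt_snd.trans hj).ne')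
  have apply_thd_lt : π l < π 2 := by
    rw [h.apply_thd_eq_zero, Fin.pos_iff_ne_zero, ← h.apply_thd_eq_zero]
    exact π.injective.ne hl.ne
  exact hj.ne' (h.unique_321 (h.fst_lt_snd.trans hj) hl apply_thd_lt lt_apply_fst).2.1

theorem thd_eq_two_or_apply_fst_eq_two (h : Avoids132WithOnly321At π i j l) :
    l = 2 ∨ π i = 2 := by
  by_contra! hne
  have hl : 2 < l := h.two_le_thd.lt_of_ne' hne.1
  have hi : 2 < π i := h.two_le_apply_fst.lt_of_ne' hne.2
  have two_lt : 2 < π⁻¹ 2 := hl.trans (by simpa using h.inv.apply_fst_lt_apply_two hi)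
  have lt_apply_two : 2 < π 2 := hi.trans (h.apply_fst_lt_apply_two hl)
  have apply_inv : π (π⁻¹ 2) = 2 := π.apply_symm_apply 2
  refine h.not_132 (a := j) (b := 2) (c := π⁻¹ 2) ?_ two_lt ?_ ?_
  · exact h.snd_eq_one ▸ fin_one_lt_two
  · rw [h.apply_snd_eq_one, apply_inv]
    exact fin_one_lt_two
  · rwa [apply_inv]

end Values

end Avoids132WithOnly321At

/-- The permutation with (0-indexed) word `k 1 0 2 3 ⋯`, obtained from `1 0 2 3 ⋯` by moving the
entry `k` to the front. Only `2 ≤ k` is of interest. -/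
def frontPerm {m : ℕ} (k : Fin (m + 3)) : Equiv.Perm (Fin (m + 3)) :=
  k.cycleRange⁻¹ * Equiv.swap 1 2

section FrontPerm

variable {m : ℕ} {k : Fin (m + 3)}

theorem frontPerm_apply_zero : frontPerm k 0 = k := by
  have swap_zero : Equiv.swap (1 : Fin (m + 3)) 2 0 = 0 :=
    Equiv.swap_apply_of_ne_of_ne Fin.zero_ne_one (Fin.ne_zero_of_lt fin_one_lt_two).symm
  rw [frontPerm, Equiv.Perm.mul_apply, swap_zero]
  exact Fin.cycleRange_symm_zero k

theorem frontPerm_apply_one (hk : 2 ≤ k) : frontPerm k 1 = 1 := by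
  have one_lt : 1 < k := fin_one_lt_two.trans_le hk
  rw [frontPerm, Equiv.Perm.mul_apply, Equiv.swap_apply_left, Equiv.Perm.inv_eq_iff_eq,
    Fin.cycleRange_of_lt one_lt]
  rfl

theorem frontPerm_apply_two (hk : 2 ≤ k) : frontPerm k 2 = 0 := by
  have zero_lt : 0 < k := bot_lt_of_lt (fin_one_lt_two.trans_le hk)
  rw [frontPerm, Equiv.Perm.mul_apply, Equiv.swap_apply_right, Equiv.Perm.inv_eq_iff_eq,
    Fin.cycleRange_of_lt zero_lt, zero_add]

theorem strictMonoOn_frontPerm : StrictMonoOn (frontPerm k) (Set.Ioi 2) := by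
  have apply_succ {p : Fin (m + 2)} (hp : 2 < p.succ) : frontPerm k p.succ = k.succAbove p := by
    rw [frontPerm, Equiv.Perm.mul_apply,
      Equiv.swap_apply_of_ne_of_ne (fin_one_lt_two.trans hp).ne' hp.ne']
    exact Fin.cycleRange_symm_succ k p
  intro a ha b hb hab
  obtain ⟨p, rfl⟩ := Fin.exists_succ_eq.2 (Fin.ne_zero_of_lt ha)
  obtain ⟨q, rfl⟩ := Fin.exists_succ_eq.2 (Fin.ne_zero_of_lt hb)
  rw [apply_succ ha, apply_succ hb]
  exact Fin.strictMono_succAbove k (Fin.succ_lt_succ_iff.1 hab)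

theorem frontPerm_injective : Function.Injective (frontPerm (m := m)) := fun a b hab ↦ by
  rw [← frontPerm_apply_zero (k := a), hab, frontPerm_apply_zero]

theorem avoids132WithOnly321At_frontPerm (hk : 2 ≤ k) :
    Avoids132WithOnly321At (frontPerm k) 0 1 2 := by
  have h₀ : frontPerm k 0 = k := frontPerm_apply_zero
  have h₁ := frontPerm_apply_one hk
  have h₂ := frontPerm_apply_two hk
  have hmono {a b : Fin (m + 3)} (ha : 2 < a) (hab : a < b) : frontPerm k a < frontPerm k b :=
    strictMonoOn_frontPerm ha (ha.trans hab) hab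
  constructor
  case not_132 =>
    intro a b c hab hbc hac hcb
    have two_lt : 2 < b := by
      by_contra! hb
      rcases fin_le_two_iff.1 hb with rfl | rfl | rfl
      · exact Fin.not_lt_zero a hab
      · rw [h₁, Fin.lt_one_iff] at hcb
        exact Fin.not_lt_zero _ (hcb ▸ hac)
      · exact Fin.not_lt_zero _ (h₂ ▸ hcb)
    exact (hmono two_lt hbc).asymm hcb
  case fst_lt_snd => exact Fin.zero_lt_one
  case snd_lt_thd => exact fin_one_lt_two
  case apply_thd_lt_apply_snd =>
    rw [h₂, h₁]
    exact Fin.zero_lt_one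
  case apply_snd_lt_apply_fst =>
    rw [h₁, h₀]
    exact fin_one_lt_two.trans_le hk
  case unique_321 =>
    intro a b c hab hbc hcb hba
    have le_two : b ≤ 2 := not_lt.1 fun hb ↦ (hmono hb hbc).asymm hcb
    rcases fin_le_two_iff.1 le_two with rfl | rfl | rfl
    · exact absurd hab (Fin.not_lt_zero a)
    · rw [h₁, Fin.lt_one_iff, ← h₂] at hcb
      exact ⟨(Fin.lt_one_iff a).1 hab, rfl, (frontPerm k).injective hcb⟩
    · exact absurd (h₂ ▸ hcb) (Fin.not_lt_zero _)

end FrontPerm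

theorem Avoids132WithOnly321At.eq_frontPerm {m : ℕ} {π : Equiv.Perm (Fin (m + 3))}
    {i j : Fin (m + 3)} (h : Avoids132WithOnly321At π i j 2) : π = frontPerm (π i) := by
  refine perm_eq_of_eqOn_of_strictMonoOn_compl (D := Set.Iic 2) ?_ ?_ ?_
  · intro p hp
    rcases fin_le_two_iff.1 hp with rfl | rfl | rfl
    · rw [frontPerm_apply_zero, h.fst_eq_zero]
    · rw [frontPerm_apply_one h.two_le_apply_fst]
      simpa only [h.snd_eq_one] using h.apply_snd_eq_one
    · rw [frontPerm_apply_two h.two_le_apply_fst, h.apply_thd_eq_zero]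
  · rw [Set.compl_Iic]
    intro p hp q hq hpq
    exact h.apply_lt_apply (h.snd_lt_thd.trans hp) hpq (ne_of_gt hq)
  · rw [Set.compl_Iic]
    exact strictMonoOn_frontPerm

theorem setOf_avoids_and_containsOnce_eq_union (m : ℕ) :
    {π : Equiv.Perm (Fin (m + 3)) | avoids p132 π ∧ containsOnce p321 π} =
      frontPerm '' Set.Ici 2 ∪ (fun k ↦ (frontPerm k)⁻¹) '' Set.Ioi 2 := by
  ext π
  rw [Set.mem_ofPred_eq, avoids_and_containsOnce_iff_exists]
  constructor
  · rintro ⟨i, j, l, h⟩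
    rcases h.two_le_thd.eq_or_lt with rfl | hl
    · exact Or.inl ⟨π i, h.two_le_apply_fst, h.eq_frontPerm.symm⟩
    · have apply_fst : π i = 2 := h.thd_eq_two_or_apply_fst_eq_two.resolve_left hl.ne'
      have h_inv : Avoids132WithOnly321At π⁻¹ (π l) (π j) 2 := apply_fst ▸ h.inv
      have inv_eq : π⁻¹ = frontPerm l :=
        h_inv.eq_frontPerm.trans (congrArg frontPerm (π.symm_apply_apply l))
      exact Or.inr ⟨l, hl, inv_eq_iff_eq_inv.2 inv_eq.symm⟩
  · rintro (⟨k, hk, rfl⟩ | ⟨k, hk, rfl⟩)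
    · exact ⟨_, _, _, avoids132WithOnly321At_frontPerm hk⟩
    · exact ⟨_, _, _, (avoids132WithOnly321At_frontPerm (le_of_lt hk)).inv⟩

theorem disjoint_image_frontPerm_image_inv (m : ℕ) :
    Disjoint (frontPerm '' Set.Ici (2 : Fin (m + 3)))
      ((fun k ↦ (frontPerm k)⁻¹) '' Set.Ioi 2) := by
  rw [Set.disjoint_left]
  rintro _ ⟨a, ha, rfl⟩ ⟨b, hb, hab⟩
  have hb_two : b = 2 := by
    rw [← frontPerm_apply_zero (k := b), ← frontPerm_apply_two ha, ← hab]
    exact Equiv.apply_symm_apply _ _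
  exact hb.ne' hb_two

theorem sAvoidContain_p132_p321 (n : ℕ) (hn : 3 ≤ n) : sAvoidContain p132 p321 n = 2 * n - 5 := by
  obtain ⟨m, rfl⟩ := Nat.exists_eq_add_of_le' hn
  have card_Ici : (Set.Ici (2 : Fin (m + 3))).ncard = m + 1 := by
    rw [← Finset.coe_Ici, Set.ncard_coe_finset, Fin.card_Ici, Fin.val_two]
    omega
  have card_Ioi : (Set.Ioi (2 : Fin (m + 3))).ncard = m := by
    rw [← Finset.coe_Ioi, Set.ncard_coe_finset, Fin.card_Ioi, Fin.val_two]
    omega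
  calc sAvoidContain p132 p321 (m + 3)
      = (frontPerm '' Set.Ici (2 : Fin (m + 3)) ∪
          (fun k ↦ (frontPerm k)⁻¹) '' Set.Ioi 2).ncard := by
        rw [← setOf_avoids_and_containsOnce_eq_union]
        rfl
    _ = (m + 1) + m := by
        rw [Set.ncard_union_eq (disjoint_image_frontPerm_image_inv m),
          Set.ncard_image_of_injective _ frontPerm_injective,
          Set.ncard_image_of_injective _ fun _ _ h ↦ frontPerm_injective (inv_injective h),
          card_Ici, card_Ioi]
    _ = 2 * (m + 3) - 5 := by omega

/-- Theorem 4.5: for each listed pair `(α,β)`, `s_n(α;β) = 2n−5` for `n ≥ 3`. -/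
theorem sAvoidContain_eq_of_mem_classC2 :
    ∀ p ∈ [(p132, p321), (p213, p321), (p231, p123), (p312, p123)],
      ∀ n : ℕ, 3 ≤ n → sAvoidContain p.1 p.2 n = 2 * n - 5 := by
  have p231_eq : p231 = p132 * Fin.revPerm := by decide
  have p312_eq : p312 = Fin.revPerm * p132 := by decide
  have p213_eq : p213 = Fin.revPerm * p231 := by decide
  have p123_eq_mul_rev : p123 = p321 * Fin.revPerm := by decide
  have p123_eq_rev_mul : p123 = Fin.revPerm * p321 := by decide
  have p321_eq : p321 = Fin.revPerm * p123 := by decide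
  have card_p231 (n : ℕ) (hn : 3 ≤ n) : sAvoidContain p231 p123 n = 2 * n - 5 := by
    rw [p231_eq, p123_eq_mul_rev, sAvoidContain_mul_revPerm, sAvoidContain_p132_p321 n hn]
  have card_p213 (n : ℕ) (hn : 3 ≤ n) : sAvoidContain p213 p321 n = 2 * n - 5 := by
    rw [p213_eq, p321_eq, sAvoidContain_revPerm_mul, card_p231 n hn]
  have card_p312 (n : ℕ) (hn : 3 ≤ n) : sAvoidContain p312 p123 n = 2 * n - 5 := by
    rw [p312_eq, p123_eq_rev_mul, sAvoidContain_revPerm_mul, sAvoidContain_p132_p321 n hn]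
  simpa only [List.forall_mem_cons, List.not_mem_nil, false_imp_iff, implies_true, and_true] using
    ⟨sAvoidContain_p132_p321, card_p213, card_p231, card_p312⟩
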